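/- arXiv:1903.07757 — 2 statements merged into one kernel-verified Lean document; each statement's English description precedes it below -/
import Mathlib

section
/- Let A, B ⊆ ℝ² be Lebesgue-measurable sets with finite positive measure, and let F_{A,B}(r) = (λ₂×λ₂){(x,y) ∈ A×B : |x−y| < r} / (λ₂(A)·λ₂(B)) be the CDF of the distance between a uniform random point of A and an independent uniform random point of B. Then for every r ≥ 0, F_{A,B}(r) = (1/(λ₂(A)·λ₂(B))) · ∫₀^r s · (∫₀^{2π} λ₂(A ∩ (B + s(cos θ, sin θ))) dθ) ds, where B + v denotes the translate {x + v : x ∈ B} of B by the vector v. -/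
open MeasureTheory Real Set
open scoped ENNReal

/-- The plane `ℝ²` with the Euclidean norm and 2-dimensional Lebesgue measure. -/
abbrev Plane : Type := EuclideanSpace ℝ (Fin 2)

/-!
The shear `(x, y) ↦ (x - y, y)` preserves the product measure, so the difference of points of `A`
and `B` is distributed with density `v ↦ λ₂(A ∩ (B + v))`. Polar coordinates then push this density
forward under the norm: the distance has density `s ↦ s ∫ λ₂(A ∩ (B + s(cos θ, sin θ))) dθ` on
`(0, ∞)`, and integrating it over `(0, r)` gives the distribution function.
-/

section CrossCovariogram

open scoped Pointwise

variable {G : Type*} [AddGroup G] [MeasurableSpace G]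

/-- The cross-covariogram of `A` and `B`: the measure of the overlap of `A` with the left translate
of `B` by `v`. -/
noncomputable def crossCovariogram (μ : Measure G) (A B : Set G) (v : G) : ℝ≥0∞ :=
  μ (A ∩ (v +ᵥ B))

lemma crossCovariogram_le (μ : Measure G) (A B : Set G) (v : G) :
    crossCovariogram μ A B v ≤ μ A :=
  measure_mono inter_subset_left

lemma crossCovariogram_eq_measure_preimage [MeasurableAdd G] (μ : Measure G)
    [μ.IsAddLeftInvariant] (A B : Set G) (v : G) :
    crossCovariogram μ A B v = μ {y | v + y ∈ A ∧ y ∈ B} := by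
  rw [crossCovariogram, ← measure_preimage_add μ v]
  congr 1
  ext y
  simp [mem_vadd_set_iff_neg_vadd_mem]

variable [MeasurableAdd₂ G] {A B : Set G}

lemma measurableSet_add_mem_and_mem (hA : MeasurableSet A) (hB : MeasurableSet B) :
    MeasurableSet {p : G × G | p.1 + p.2 ∈ A ∧ p.2 ∈ B} :=
  (measurable_add hA).inter (measurable_snd hB)

lemma measurable_crossCovariogram (μ : Measure G) [SFinite μ] [μ.IsAddLeftInvariant]
    (hA : MeasurableSet A) (hB : MeasurableSet B) :
    Measurable (crossCovariogram μ A B) := by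
  simpa only [funext (crossCovariogram_eq_measure_preimage μ A B)] using!
    measurable_measure_prodMk_left (ν := μ) (measurableSet_add_mem_and_mem hA hB)

theorem map_sub_prod_restrict [MeasurableNeg G] (μ : Measure G) [SFinite μ]
    [μ.IsAddLeftInvariant] [μ.IsAddRightInvariant] (hA : MeasurableSet A) (hB : MeasurableSet B) :
    ((μ.restrict A).prod (μ.restrict B)).map (fun p => p.1 - p.2) =
      μ.withDensity (crossCovariogram μ A B) := by
  have hS := measurableSet_add_mem_and_mem hA hB
  ext D hD
  calc ((μ.restrict A).prod (μ.restrict B)).map (fun p => p.1 - p.2) D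
    _ = (μ.prod μ) ((fun p : G × G => (p.1 - p.2, p.2)) ⁻¹'
          ({p | p.1 + p.2 ∈ A ∧ p.2 ∈ B} ∩ D ×ˢ univ)) := by
      rw [Measure.map_apply measurable_sub hD, Measure.prod_restrict,
        Measure.restrict_apply (measurable_sub hD)]
      congr 1
      ext p
      simp [and_comm]
    _ = ((μ.restrict D).prod μ) {p | p.1 + p.2 ∈ A ∧ p.2 ∈ B} := by
      rw [(measurePreserving_sub_prod μ μ).measure_preimage
        (hS.inter (hD.prod .univ)).nullMeasurableSet, ← Measure.restrict_apply hS,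
        ← Measure.prod_restrict, Measure.restrict_univ]
    _ = ∫⁻ v in D, crossCovariogram μ A B v ∂μ := by
      simp only [Measure.prod_apply hS, crossCovariogram_eq_measure_preimage]
      rfl
    _ = μ.withDensity (crossCovariogram μ A B) D := (withDensity_apply _ hD).symm

end CrossCovariogram

section Polar

/-- The point of the plane with polar coordinates `(s, θ)`. -/
noncomputable def Plane.ofPolar (s θ : ℝ) : Plane := !₂[s * cos θ, s * sin θ]

open Plane

lemma orthonormalBasisOneI_repr_polarCoord_symm (p : ℝ × ℝ) :
    Complex.orthonormalBasisOneI.repr (Complex.polarCoord.symm p) = ofPolar p.1 p.2 := by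
  ext i
  fin_cases i <;> simp [ofPolar, Complex.cos_ofReal_re, Complex.sin_ofReal_re]

lemma norm_ofPolar (s θ : ℝ) : ‖ofPolar s θ‖ = |s| := by
  rw [← orthonormalBasisOneI_repr_polarCoord_symm (s, θ), LinearIsometryEquiv.norm_map,
    Complex.norm_polarCoord_symm]

lemma ofPolar_add_two_pi (s θ : ℝ) : ofPolar s (θ + 2 * π) = ofPolar s θ := by
  simp only [ofPolar, cos_add_two_pi, sin_add_two_pi]

lemma continuous_ofPolar : Continuous fun p : ℝ × ℝ => ofPolar p.1 p.2 := by
  unfold ofPolar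
  fun_prop

variable {f : Plane → ℝ≥0∞}

/-- The density at `s` of the radial part `‖v‖` when `v` has density `f` on the plane: the integral
of `f` over the circle of radius `s`. Only the values at `s > 0` are meaningful. -/
noncomputable def radialDensity (f : Plane → ℝ≥0∞) (s : ℝ) : ℝ≥0∞ :=
  ENNReal.ofReal s * ∫⁻ θ in Ioo (-π) π, f (ofPolar s θ)

lemma measurable_comp_ofPolar (hf : Measurable f) (s : ℝ) :
    Measurable fun θ => f (ofPolar s θ) :=
  hf.comp (continuous_ofPolar.measurable.comp measurable_prodMk_left)

lemma measurable_radialDensity (hf : Measurable f) : Measurable (radialDensity f) :=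
  ENNReal.measurable_ofReal.mul
    (hf.comp continuous_ofPolar.measurable).lintegral_prod_right'

theorem lintegral_eq_lintegral_radialDensity (hf : Measurable f) :
    ∫⁻ v, f v = ∫⁻ s in Ioi 0, radialDensity f s := by
  have hmeas : Measurable fun p : ℝ × ℝ => ENNReal.ofReal p.1 * f (ofPolar p.1 p.2) :=
    measurable_fst.ennreal_ofReal.mul (hf.comp continuous_ofPolar.measurable)
  calc ∫⁻ v, f v
    _ = ∫⁻ z, f (Complex.orthonormalBasisOneI.repr z) :=
      (Complex.orthonormalBasisOneI.measurePreserving_repr.lintegral_comp hf).symm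
    _ = ∫⁻ p in Ioi 0 ×ˢ Ioo (-π) π, ENNReal.ofReal p.1 * f (ofPolar p.1 p.2) := by
      rw [← Complex.lintegral_comp_polarCoord_symm]
      simp only [orthonormalBasisOneI_repr_polarCoord_symm, smul_eq_mul, polarCoord_target]
    _ = ∫⁻ s in Ioi 0, ∫⁻ θ in Ioo (-π) π, ENNReal.ofReal s * f (ofPolar s θ) :=
      setLIntegral_prod _ hmeas.aemeasurable
    _ = ∫⁻ s in Ioi 0, radialDensity f s :=
      lintegral_congr fun s => lintegral_const_mul _ (measurable_comp_ofPolar hf s)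

lemma radialDensity_indicator_norm_preimage (f : Plane → ℝ≥0∞) (T : Set ℝ) {s : ℝ} (hs : 0 ≤ s) :
    radialDensity ((norm ⁻¹' T).indicator f) s = T.indicator (radialDensity f) s := by
  by_cases hsT : s ∈ T <;> simp [radialDensity, indicator, norm_ofPolar, abs_of_nonneg hs, hsT]

theorem map_norm_withDensity (hf : Measurable f) :
    (volume.withDensity f).map norm = (volume.restrict (Ioi 0)).withDensity (radialDensity f) := by
  ext T hT
  have hT' : MeasurableSet (norm ⁻¹' T : Set Plane) := measurable_norm hT
  rw [Measure.map_apply measurable_norm hT, withDensity_apply _ hT', withDensity_apply _ hT,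
    ← lintegral_indicator hT', ← lintegral_indicator hT,
    lintegral_eq_lintegral_radialDensity (hf.indicator hT')]
  exact setLIntegral_congr_fun measurableSet_Ioi fun s hs =>
    radialDensity_indicator_norm_preimage f T (mem_Ioi.1 hs).le

lemma radialDensity_lt_top {c : ℝ≥0∞} (hc : c < ⊤) (hfc : ∀ v, f v ≤ c) (s : ℝ) :
    radialDensity f s < ⊤ := by
  have hangle : ∫⁻ θ in Ioo (-π) π, f (ofPolar s θ) < ⊤ :=
    calc ∫⁻ θ in Ioo (-π) π, f (ofPolar s θ)
      _ ≤ c * volume (Ioo (-π) π) :=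
        (lintegral_mono fun θ => hfc _).trans_eq (setLIntegral_const _ c)
      _ < ⊤ := ENNReal.mul_lt_top hc measure_Ioo_lt_top
  exact ENNReal.mul_lt_top ENNReal.ofReal_lt_top hangle

lemma toReal_radialDensity (hf : Measurable f) (hfin : ∀ v, f v < ⊤) {s : ℝ} (hs : 0 ≤ s) :
    (radialDensity f s).toReal = s * ∫ θ in (0 : ℝ)..2 * π, (f (ofPolar s θ)).toReal := by
  have hper : Function.Periodic (fun θ => (f (ofPolar s θ)).toReal) (2 * π) := fun θ => by
    simp only [ofPolar_add_two_pi]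
  have hshift : ∫ θ in (0 : ℝ)..2 * π, (f (ofPolar s θ)).toReal =
      ∫ θ in -π..π, (f (ofPolar s θ)).toReal := by
    simpa [two_mul] using hper.intervalIntegral_add_eq 0 (-π)
  rw [radialDensity, ENNReal.toReal_mul, ENNReal.toReal_ofReal hs, hshift,
    intervalIntegral.integral_of_le (by linarith [pi_pos]), integral_Ioc_eq_integral_Ioo,
    integral_toReal (measurable_comp_ofPolar hf s).aemeasurable (.of_forall fun θ => hfin _)]

lemma toReal_setLIntegral_radialDensity (hf : Measurable f) {c : ℝ≥0∞} (hc : c < ⊤)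
    (hfc : ∀ v, f v ≤ c) {r : ℝ} (hr : 0 ≤ r) :
    (∫⁻ s in Ioo 0 r, radialDensity f s).toReal =
      ∫ s in (0 : ℝ)..r, s * ∫ θ in (0 : ℝ)..2 * π, (f (ofPolar s θ)).toReal := by
  rw [intervalIntegral.integral_of_le hr, integral_Ioc_eq_integral_Ioo,
    ← integral_toReal (measurable_radialDensity hf).aemeasurable
      (.of_forall (radialDensity_lt_top hc hfc))]
  exact setIntegral_congr_fun measurableSet_Ioo fun s hs =>
    toReal_radialDensity hf (fun v => (hfc v).trans_lt hc) hs.1.le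

end Polar

section Distance

variable {A B : Set Plane}

theorem map_dist_prod_restrict (hA : MeasurableSet A) (hB : MeasurableSet B) :
    (((volume : Measure Plane).restrict A).prod (volume.restrict B)).map (fun p => dist p.1 p.2) =
      (volume.restrict (Ioi 0)).withDensity (radialDensity (crossCovariogram volume A B)) := by
  simp only [dist_eq_norm]
  rw [← map_norm_withDensity (measurable_crossCovariogram volume hA hB),
    ← map_sub_prod_restrict volume hA hB, Measure.map_map measurable_norm measurable_sub]
  rfl

lemma prod_dist_lt_eq_setLIntegral_radialDensity (hA : MeasurableSet A) (hB : MeasurableSet B)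
    (r : ℝ) :
    ((volume : Measure Plane).prod volume) {p | p.1 ∈ A ∧ p.2 ∈ B ∧ dist p.1 p.2 < r} =
      ∫⁻ s in Ioo 0 r, radialDensity (crossCovariogram volume A B) s := by
  have hdist : Measurable fun p : Plane × Plane => dist p.1 p.2 := measurable_dist
  calc ((volume : Measure Plane).prod volume) {p | p.1 ∈ A ∧ p.2 ∈ B ∧ dist p.1 p.2 < r}
    _ = (((volume : Measure Plane).restrict A).prod (volume.restrict B)).map
          (fun p => dist p.1 p.2) (Iio r) := by
      rw [Measure.map_apply hdist measurableSet_Iio, Measure.prod_restrict,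
        Measure.restrict_apply (hdist measurableSet_Iio)]
      congr 1
      ext p
      simp only [mem_ofPred_eq, mem_inter_iff, mem_preimage, mem_Iio, mem_prod]
      tauto
    _ = ∫⁻ s in Ioo 0 r, radialDensity (crossCovariogram volume A B) s := by
      rw [map_dist_prod_restrict hA hB, withDensity_apply _ measurableSet_Iio,
        Measure.restrict_restrict measurableSet_Iio, inter_comm, Ioi_inter_Iio]

lemma crossCovariogram_ofPolar (A B : Set Plane) (s θ : ℝ) :
    crossCovariogram volume A B (Plane.ofPolar s θ) =
      volume (A ∩ ((fun x : Plane => x + !₂[s * cos θ, s * sin θ]) '' B)) := by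
  simp only [crossCovariogram, Plane.ofPolar, ← image_vadd, vadd_eq_add, add_comm]

end Distance

/-- **Integral (CDF) form of the distance-distribution theorem.**
If `A, B ⊆ ℝ²` are measurable with finite positive Lebesgue measure and
`F` is the CDF of the distance between independent uniform points of `A` and `B`, then for
every `r ≥ 0`,
`F r = (1/(λ₂(A)·λ₂(B))) ∫₀^r s (∫₀^{2π} λ₂(A ∩ (B + s(cos θ, sin θ))) dθ) ds`. -/
theorem distance_cdf_polar_integral_form
    (A B : Set Plane) (hAm : MeasurableSet A) (hBm : MeasurableSet B)
    (hA0 : 0 < volume A) (hAfin : volume A < ⊤)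
    (hB0 : 0 < volume B) (hBfin : volume B < ⊤)
    (F : ℝ → ℝ)
    (hF : ∀ r : ℝ, F r =
      (((volume : Measure Plane).prod (volume : Measure Plane))
        {p : Plane × Plane | p.1 ∈ A ∧ p.2 ∈ B ∧ dist p.1 p.2 < r}).toReal /
      ((volume A).toReal * (volume B).toReal))
    (r : ℝ) (hr : 0 ≤ r) :
    F r = (1 / ((volume A).toReal * (volume B).toReal)) *
      ∫ s in (0:ℝ)..r, s *
        ∫ θ in (0:ℝ)..(2 * π),
          (volume (A ∩ ((fun x : Plane => x + (show Plane from !₂[s * Real.cos θ, s * Real.sin θ])) '' B))).toReal := by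
  rw [hF, prod_dist_lt_eq_setLIntegral_radialDensity hAm hBm,
    toReal_setLIntegral_radialDensity (measurable_crossCovariogram volume hAm hBm) hAfin
      (crossCovariogram_le volume A B) hr,
    div_eq_inv_mul, one_div]
  simp only [crossCovariogram_ofPolar]
end

section
/- Let R > 0 and let D ⊆ ℝ² be the disk of radius R centered at the origin. Let F(r) = (λ₂×λ₂){(x,y) ∈ D×D : |x−y| < r} / (π²R⁴) be the CDF of the distance between two independent uniform random points in D. Then for every r with 0 < r < 2R, F is differentiable at r with derivative f(r) = (2r/(πR⁴)) · (2R²·arccos(r/(2R)) − (r/2)·√(4R² − r²)). -/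
open MeasureTheory Real Set
open scoped ENNReal

/-!
After the shear `(x, y) ↦ (x, y - x)`, Tonelli writes the probability that two independent uniform
points of `A` and `B` are closer than `r` as the integral over `‖z‖ < r` of the covariogram
`z ↦ μ (A ∩ (B - z))`, up to normalization. If the covariogram depends only on `‖z‖`, polar
coordinates turn this into a one-dimensional integral over `(0, r)`, which the fundamental theorem
of calculus differentiates. For a disk of radius `R` the covariogram at distance `s` is the area of
a lens; slicing the lens into chords parallel to its two circles' common chord gives
`4 * ∫ x in s / 2..R, √(R ^ 2 - x ^ 2)`.
-/

open Metric Module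

section Covariogram

theorem measureReal_prod_eq_integral_symm {α β : Type*} [MeasurableSpace α] [MeasurableSpace β]
    {μ : Measure α} {ν : Measure β} [SFinite μ] [SFinite ν] {S : Set (α × β)}
    (hS : MeasurableSet S) (hfin : ∀ᵐ y ∂ν, μ ((fun x ↦ (x, y)) ⁻¹' S) < ∞) :
    (μ.prod ν).real S = ∫ y, μ.real ((fun x ↦ (x, y)) ⁻¹' S) ∂ν := by
  rw [measureReal_def, Measure.prod_apply_symm hS,
    ← integral_toReal (measurable_measure_prodMk_right hS).aemeasurable hfin]
  rfl

variable {G : Type*} [AddGroup G] [MeasurableSpace G]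

/-- The cross-covariogram `z ↦ μ (A ∩ (B - z))` of `A` and `B`, that is, the measure of the set of
those `x ∈ A` whose translate `x + z` lies in `B`. It is real-valued, hence only meaningful when
this measure is finite. -/
noncomputable def covariogram (μ : Measure G) (A B : Set G) (z : G) : ℝ :=
  μ.real (A ∩ (· + z) ⁻¹' B)

theorem measureReal_prod_neg_add_mem [MeasurableAdd₂ G] [MeasurableNeg G] (μ ν : Measure G)
    [SFinite μ] [SFinite ν] [ν.IsAddLeftInvariant] {A B C : Set G} (hA : MeasurableSet A)
    (hB : MeasurableSet B) (hC : MeasurableSet C) (hμA : μ A ≠ ∞) :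
    (μ.prod ν).real {p | p.1 ∈ A ∧ p.2 ∈ B ∧ -p.1 + p.2 ∈ C} =
      ∫ z in C, covariogram μ A B z ∂ν := by
  let S : Set (G × G) := {p | p.1 ∈ A ∧ p.1 + p.2 ∈ B ∧ p.2 ∈ C}
  have hS : MeasurableSet S := (measurable_fst hA).inter <|
    ((measurable_fst.add measurable_snd) hB).inter (measurable_snd hC)
  have shear : (μ.prod ν).real {p | p.1 ∈ A ∧ p.2 ∈ B ∧ -p.1 + p.2 ∈ C} = (μ.prod ν).real S := by
    rw [← (measurePreserving_prod_neg_add μ ν).measureReal_preimage hS.nullMeasurableSet]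
    simp [S]
  have fiber (z : G) : μ.real ((fun x ↦ (x, z)) ⁻¹' S) = C.indicator (covariogram μ A B) z := by
    by_cases hz : z ∈ C <;> simp [S, hz, covariogram, inter_def]
  have fiber_lt_top (z : G) : μ ((fun x ↦ (x, z)) ⁻¹' S) < ∞ :=
    (measure_mono fun _ hx ↦ hx.1).trans_lt hμA.lt_top
  rw [shear, measureReal_prod_eq_integral_symm hS (.of_forall fiber_lt_top)]
  simp_rw [fiber]
  exact integral_indicator hC

end Covariogram

section RadialCovariogram

variable {E : Type*} [NormedAddCommGroup E] [MeasurableSpace E]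

/-- The distribution function of the distance between independent points of `A` and `B`, each drawn
uniformly with respect to `μ`. -/
noncomputable def distanceCDF (μ : Measure E) (A B : Set E) (r : ℝ) : ℝ :=
  (μ.prod μ).real {p | p.1 ∈ A ∧ p.2 ∈ B ∧ dist p.1 p.2 < r} / (μ.real A * μ.real B)

variable [NormedSpace ℝ E] [FiniteDimensional ℝ E] [BorelSpace E] [Nontrivial E]
  {μ : Measure E} [μ.IsAddHaarMeasure] {c : ℝ → ℝ}

theorem setIntegral_ball_eq_of_eq_norm {f : E → ℝ} {r : ℝ} (hr : 0 ≤ r)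
    (hf : ∀ z, ‖z‖ < r → f z = c ‖z‖) :
    ∫ z in ball 0 r, f z ∂μ =
      finrank ℝ E * μ.real (ball 0 1) * ∫ s in 0..r, s ^ (finrank ℝ E - 1) * c s := by
  have radial : (ball (0 : E) r).indicator f = fun z ↦ (Iio r).indicator c ‖z‖ := by
    ext z
    by_cases hz : ‖z‖ < r <;> simp [hz, hf]
  rw [← integral_indicator measurableSet_ball, radial, integral_fun_norm_addHaar,
    intervalIntegral.integral_of_le hr, integral_Ioc_eq_integral_Ioo, ← Ioi_inter_Iio,
    ← setIntegral_indicator measurableSet_Iio]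
  simp only [smul_eq_mul, nsmul_eq_mul, mul_assoc, indicator_mul_right]

theorem hasDerivAt_distanceCDF_of_covariogram_eq_norm {A B : Set E} (hA : MeasurableSet A)
    (hB : MeasurableSet B) (hμA : μ A ≠ ∞) {ρ r : ℝ} (hc : ContinuousOn c (Ico 0 ρ))
    (hcov : ∀ z, ‖z‖ < ρ → covariogram μ A B z = c ‖z‖) (hr : r ∈ Ioo 0 ρ) :
    HasDerivAt (distanceCDF μ A B)
      (finrank ℝ E * μ.real (ball 0 1) * (r ^ (finrank ℝ E - 1) * c r) / (μ.real A * μ.real B))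
      r := by
  have cdf_eq : ∀ t ∈ Ioo 0 ρ, distanceCDF μ A B t = finrank ℝ E * μ.real (ball 0 1) *
      (∫ s in 0..t, s ^ (finrank ℝ E - 1) * c s) / (μ.real A * μ.real B) := by
    intro t ht
    rw [distanceCDF, ← setIntegral_ball_eq_of_eq_norm ht.1.le fun z hz ↦ hcov z (hz.trans ht.2),
      ← measureReal_prod_neg_add_mem μ μ hA hB measurableSet_ball hμA]
    simp only [mem_ball_zero_iff, ← dist_eq_norm_neg_add]
  have hg : ContinuousOn (fun s ↦ s ^ (finrank ℝ E - 1) * c s) (Ico 0 ρ) := by fun_prop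
  have ftc : HasDerivAt (fun t ↦ ∫ s in 0..t, s ^ (finrank ℝ E - 1) * c s)
      (r ^ (finrank ℝ E - 1) * c r) r :=
    intervalIntegral.integral_hasDerivAt_right
      ((hg.mono (Icc_subset_Ico_right hr.2)).intervalIntegrable_of_Icc hr.1.le)
      ((hg.mono Ioo_subset_Ico_self).stronglyMeasurableAtFilter isOpen_Ioo r hr)
      (hg.continuousAt (Ico_mem_nhds hr.1 hr.2))
  exact ((ftc.const_mul _).div_const _).congr_of_eventuallyEq <|
    Filter.eventually_of_mem (Ioo_mem_nhds hr.1 hr.2) cdf_eq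

end RadialCovariogram

section HalfChords

theorem hasDerivAt_arccos_div {R x : ℝ} (hx : x ∈ Ioo (-R) R) :
    HasDerivAt (fun x ↦ arccos (x / R)) (-1 / √(R ^ 2 - x ^ 2)) x := by
  have hR : 0 < R := by linarith [hx.1, hx.2]
  have sqrt_scale : √(R ^ 2 - x ^ 2) = R * √(1 - (x / R) ^ 2) := by
    rw [← sqrt_sq hR.le, ← sqrt_mul (sq_nonneg R), sqrt_sq hR.le]
    congr 1
    field_simp
  have ne_neg_one : x / R ≠ -1 := ((lt_div_iff₀ hR).2 (by linarith [hx.1])).ne'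
  have ne_one : x / R ≠ 1 := ((div_lt_one hR).2 hx.2).ne
  convert! (hasDerivAt_arccos ne_neg_one ne_one).comp x ((hasDerivAt_id x).div_const R) using 1
  rw [sqrt_scale]
  ring

theorem hasDerivAt_mul_sqrt_sub_arccos {R x : ℝ} (hx : x ∈ Ioo (-R) R) :
    HasDerivAt (fun x ↦ (x * √(R ^ 2 - x ^ 2) - R ^ 2 * arccos (x / R)) / 2)
      √(R ^ 2 - x ^ 2) x := by
  have hpos : 0 < R ^ 2 - x ^ 2 := sub_pos.2 (sq_lt_sq' hx.1 hx.2)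
  have hsqrt : HasDerivAt (fun x ↦ √(R ^ 2 - x ^ 2)) (-x / √(R ^ 2 - x ^ 2)) x := by
    convert! ((hasDerivAt_pow 2 x).const_sub (R ^ 2)).sqrt hpos.ne' using 1
    ring
  convert! (((hasDerivAt_id' x).mul hsqrt).sub
    ((hasDerivAt_arccos_div hx).const_mul (R ^ 2))).div_const 2 using 1
  have := (sqrt_pos.2 hpos).ne'
  field_simp
  linear_combination sq_sqrt hpos.le

theorem integral_sqrt_sq_sub_sq {R h : ℝ} (hR : 0 < R) (hh : h ∈ Icc (-R) R) :
    ∫ x in h..R, √(R ^ 2 - x ^ 2) = (R ^ 2 * arccos (h / R) - h * √(R ^ 2 - h ^ 2)) / 2 := by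
  have := continuous_arccos
  rw [intervalIntegral.integral_eq_sub_of_hasDerivAt_of_le hh.2 (by fun_prop)
    (fun x hx ↦ hasDerivAt_mul_sqrt_sub_arccos ⟨hh.1.trans_lt hx.1, hx.2⟩)
    (Continuous.intervalIntegrable (by fun_prop) _ _), div_self hR.ne', arccos_one, sub_self,
    sqrt_zero]
  ring

theorem integral_sqrt_sq_sub_abs_add_sq {R h : ℝ} (hh : h ∈ Icc 0 R) :
    ∫ a, √(R ^ 2 - (|a| + h) ^ 2) = 2 * ∫ x in h..R, √(R ^ 2 - x ^ 2) := by
  have shift : ∫ a in Ioi 0, √(R ^ 2 - (a + h) ^ 2) = ∫ x in Ioi h, √(R ^ 2 - x ^ 2) := by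
    simpa using (measurePreserving_add_right volume h).setIntegral_preimage_emb
      (measurableEmbedding_addRight h) (fun x ↦ √(R ^ 2 - x ^ 2)) (Ioi h)
  rw [integral_comp_abs (f := fun a ↦ √(R ^ 2 - (a + h) ^ 2)), shift,
    intervalIntegral.integral_of_le hh.2,
    setIntegral_eq_of_subset_of_forall_sdiff_eq_zero measurableSet_Ioi Ioc_subset_Ioi_self]
  rintro x ⟨hhx, hxR⟩
  have hRx : R < x := not_le.1 fun hle ↦ hxR ⟨hhx, hle⟩
  exact sqrt_eq_zero_of_nonpos (sub_nonpos.2 (pow_le_pow_left₀ (hh.1.trans hh.2) hRx.le 2))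

theorem volume_sq_le (t : ℝ) : volume {x : ℝ | x ^ 2 ≤ t} = ENNReal.ofReal (2 * √t) := by
  rcases le_or_gt 0 t with ht | ht
  · have : {x : ℝ | x ^ 2 ≤ t} = Icc (-√t) √t := ext fun x ↦ Real.sq_le ht
    rw [this, Real.volume_Icc]
    ring_nf
  · have : {x : ℝ | x ^ 2 ≤ t} = ∅ :=
      eq_empty_of_forall_notMem fun x hx ↦ (ht.trans_le (sq_nonneg x)).not_ge hx
    simp [this, sqrt_eq_zero_of_nonpos ht.le]

theorem abs_add_sq_eq_max (y : ℝ) {h : ℝ} (hh : 0 ≤ h) :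
    (|y| + h) ^ 2 = max ((y + -h) ^ 2) ((y + h) ^ 2) := by
  rcases le_total 0 y with hy | hy
  · rw [abs_of_nonneg hy, max_eq_right (by nlinarith)]
  · rw [abs_of_nonpos hy, max_eq_left (by nlinarith)]
    ring

end HalfChords

section Lens

/-- The area of the lens in which two disks of radius `R` with centres at distance `0 ≤ s`
overlap. For `2 * R < s` it is `0`, as `arccos` is constant above `1` and `√` below `0`. -/
noncomputable def lensArea (R s : ℝ) : ℝ :=
  2 * R ^ 2 * arccos (s / (2 * R)) - s / 2 * √(4 * R ^ 2 - s ^ 2)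

theorem continuous_lensArea (R : ℝ) : Continuous (lensArea R) := by
  unfold lensArea
  have := continuous_arccos
  fun_prop

theorem volume_real_sq_add_abs_add_sq_le {R h : ℝ} (hR : 0 < R) (hh : h ∈ Icc 0 R) :
    volume.real {p : ℝ × ℝ | p.1 ^ 2 + (|p.2| + h) ^ 2 ≤ R ^ 2} = lensArea R (2 * h) := by
  have hmeas : MeasurableSet {p : ℝ × ℝ | p.1 ^ 2 + (|p.2| + h) ^ 2 ≤ R ^ 2} :=
    measurableSet_le (by fun_prop) (by fun_prop)
  have chord (y : ℝ) :
      volume ((fun x ↦ (x, y)) ⁻¹' {p : ℝ × ℝ | p.1 ^ 2 + (|p.2| + h) ^ 2 ≤ R ^ 2}) =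
        ENNReal.ofReal (2 * √(R ^ 2 - (|y| + h) ^ 2)) := by
    simp_rw [← volume_sq_le, preimage_ofPred_eq, le_sub_iff_add_le]
  have sqrt_scale : √(4 * R ^ 2 - (2 * h) ^ 2) = 2 * √(R ^ 2 - h ^ 2) := by
    rw [← sqrt_sq zero_le_two, ← sqrt_mul (sq_nonneg 2), sqrt_sq zero_le_two]
    ring_nf
  calc
    volume.real {p : ℝ × ℝ | p.1 ^ 2 + (|p.2| + h) ^ 2 ≤ R ^ 2}
    _ = ∫ y, 2 * √(R ^ 2 - (|y| + h) ^ 2) := by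
      rw [Measure.volume_eq_prod, measureReal_prod_eq_integral_symm hmeas
        (.of_forall fun y ↦ (chord y).trans_lt ENNReal.ofReal_lt_top)]
      congr with y
      rw [measureReal_def, chord, ENNReal.toReal_ofReal (by positivity)]
    _ = 4 * ∫ x in h..R, √(R ^ 2 - x ^ 2) := by
      rw [integral_const_mul, integral_sqrt_sq_sub_abs_add_sq hh]
      ring
    _ = lensArea R (2 * h) := by
      rw [integral_sqrt_sq_sub_sq hR ⟨by linarith [hh.1], hh.2⟩, lensArea, sqrt_scale,
        mul_div_mul_left _ _ two_ne_zero]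
      ring

variable {E : Type*} [NormedAddCommGroup E] [InnerProductSpace ℝ E] [FiniteDimensional ℝ E]

theorem exists_orthonormalBasis_norm_smul_eq {ι : Type*} [Fintype ι]
    (hE : finrank ℝ E = Fintype.card ι) (i : ι) (z : E) :
    ∃ b : OrthonormalBasis ι ℝ E, ‖z‖ • b i = z := by
  rcases eq_or_ne z 0 with rfl | hz
  · exact ⟨(stdOrthonormalBasis ℝ E).reindex (Fintype.equivOfCardEq (by simp [hE])), by simp⟩
  · have hv : Orthonormal ℝ (({i} : Set ι).domRestrict fun _ ↦ ‖z‖⁻¹ • z) := by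
      simp [orthonormal_subsingleton_iff, norm_smul, hz]
    obtain ⟨b, hb⟩ := hv.exists_orthonormalBasis_extension_of_card_eq hE
    exact ⟨b, by rw [hb i rfl, smul_inv_smul₀ (norm_ne_zero_iff.2 hz)]⟩

variable [MeasurableSpace E] [BorelSpace E]

theorem measurePreserving_repr_fin_two (b : OrthonormalBasis (Fin 2) ℝ E) :
    MeasurePreserving (fun x ↦ (b.repr x 0, b.repr x 1)) :=
  (volume_preserving_finTwoArrow ℝ).comp <|
    (PiLp.volume_preserving_ofLp (Fin 2)).comp b.measurePreserving_repr

theorem volume_real_closedBall_inter_closedBall_neg (hE : finrank ℝ E = 2) {R : ℝ} (hR : 0 < R)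
    {z : E} (hz : ‖z‖ ≤ R) :
    volume.real (closedBall z R ∩ closedBall (-z) R) = lensArea R (2 * ‖z‖) := by
  obtain ⟨b, hb⟩ := exists_orthonormalBasis_norm_smul_eq (hE.trans (Fintype.card_fin 2).symm) 1 z
  have hmeas : MeasurableSet {p : ℝ × ℝ | p.1 ^ 2 + (|p.2| + ‖z‖) ^ 2 ≤ R ^ 2} :=
    measurableSet_le (by fun_prop) (by fun_prop)
  have norm_sq (t : ℝ) (x : E) : ‖x + t • b 1‖ ^ 2 = b.repr x 0 ^ 2 + (b.repr x 1 + t) ^ 2 := by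
    rw [← b.repr.norm_map, EuclideanSpace.norm_sq_eq]
    simp
  have mem_iff (x : E) : x ∈ closedBall z R ∩ closedBall (-z) R ↔
      b.repr x 0 ^ 2 + (|b.repr x 1| + ‖z‖) ^ 2 ≤ R ^ 2 := by
    have sub_z : x - z = x + (-‖z‖) • b 1 := by rw [neg_smul, hb, sub_eq_add_neg]
    have add_z : x - -z = x + ‖z‖ • b 1 := by rw [hb, sub_neg_eq_add]
    rw [abs_add_sq_eq_max (b.repr x 1) (norm_nonneg z), ← max_add_add_left, max_le_iff,
      mem_inter_iff, mem_closedBall_iff_norm, mem_closedBall_iff_norm, sub_z, add_z,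
      ← sq_le_sq₀ (norm_nonneg _) hR.le, ← sq_le_sq₀ (norm_nonneg _) hR.le, norm_sq, norm_sq]
  rw [← volume_real_sq_add_abs_add_sq_le hR ⟨norm_nonneg z, hz⟩,
    ← (measurePreserving_repr_fin_two b).measureReal_preimage hmeas.nullMeasurableSet]
  exact congrArg volume.real (ext mem_iff)

theorem volume_real_closedBall_inter_closedBall (hE : finrank ℝ E = 2) {R : ℝ} (hR : 0 < R)
    {x y : E} (hxy : dist x y ≤ 2 * R) :
    volume.real (closedBall x R ∩ closedBall y R) = lensArea R (dist x y) := by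
  have left : x - midpoint ℝ x y = (2⁻¹ : ℝ) • (x - y) := by simp
  have right : y - midpoint ℝ x y = -((2⁻¹ : ℝ) • (x - y)) := by simp [← smul_neg]
  have half_dist : ‖(2⁻¹ : ℝ) • (x - y)‖ = dist x y / 2 := by
    rw [norm_smul_of_nonneg (by norm_num), ← dist_eq_norm, inv_mul_eq_div]
  rw [measureReal_def, ← measure_preimage_add_right volume (midpoint ℝ x y), preimage_inter,
    preimage_add_right_closedBall, preimage_add_right_closedBall, left, right,
    ← measureReal_def, volume_real_closedBall_inter_closedBall_neg hE hR (by linarith), half_dist,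
    mul_div_cancel₀ _ two_ne_zero]

theorem covariogram_closedBall (hE : finrank ℝ E = 2) (x : E) {R : ℝ} (hR : 0 < R) {z : E}
    (hz : ‖z‖ ≤ 2 * R) :
    covariogram volume (closedBall x R) (closedBall x R) z = lensArea R ‖z‖ := by
  have hdist : dist x (x - z) = ‖z‖ := by simp
  rw [covariogram, preimage_add_right_closedBall,
    volume_real_closedBall_inter_closedBall hE hR (hdist.trans_le hz), hdist]

theorem volume_real_ball_zero_one (hE : finrank ℝ E = 2) : volume.real (ball (0 : E) 1) = π := by
  have : Nontrivial E := nontrivial_of_finrank_pos (R := ℝ) (by lia)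
  rw [measureReal_def, InnerProductSpace.volume_ball_of_dim_even (k := 1) hE]
  simp [pi_nonneg]

theorem volume_real_closedBall (hE : finrank ℝ E = 2) (x : E) {R : ℝ} (hR : 0 ≤ R) :
    volume.real (closedBall x R) = π * R ^ 2 := by
  rw [Measure.addHaar_real_closedBall volume x hR, volume_real_ball_zero_one hE, hE, mul_comm]

theorem distance_pdf_coincident_disks_general (hE : finrank ℝ E = 2) (x : E) {R r : ℝ}
    (hr : r ∈ Ioo 0 (2 * R)) :
    HasDerivAt (distanceCDF volume (closedBall x R) (closedBall x R))
      (2 * r / (π * R ^ 4) * lensArea R r) r := by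
  have : Nontrivial E := nontrivial_of_finrank_pos (R := ℝ) (by lia)
  have hR : 0 < R := by linarith [hr.1, hr.2]
  convert! hasDerivAt_distanceCDF_of_covariogram_eq_norm measurableSet_closedBall
    measurableSet_closedBall measure_closedBall_lt_top.ne (continuous_lensArea R).continuousOn
    (fun z hz ↦ covariogram_closedBall hE x hR hz.le) hr using 1
  rw [volume_real_closedBall hE x hR.le, volume_real_ball_zero_one hE, hE]
  push_cast
  field_simp

end Lens

/-- **Distance PDF for two coincident disks (Mathai's result).**
Let `D` be the disk of radius `R > 0` centered at the origin and let `F` be the CDF of the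
distance between two independent uniform points of `D`. Then for `0 < r < 2R`, `F` is
differentiable at `r` with derivative
`(2r/(πR⁴))·(2R²·arccos(r/(2R)) − (r/2)·√(4R² − r²))`. -/
theorem distance_pdf_coincident_disks
    (R : ℝ) (hR : 0 < R)
    (D : Set Plane) (hD : D = Metric.closedBall (0 : Plane) R)
    (F : ℝ → ℝ)
    (hF : ∀ r : ℝ, F r =
      (((volume : Measure Plane).prod (volume : Measure Plane))
        {p : Plane × Plane | p.1 ∈ D ∧ p.2 ∈ D ∧ dist p.1 p.2 < r}).toReal /
      (π ^ 2 * R ^ 4))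
    (r : ℝ) (hr0 : 0 < r) (hr2R : r < 2 * R) :
    HasDerivAt F
      ((2 * r / (π * R ^ 4)) *
        (2 * R ^ 2 * Real.arccos (r / (2 * R)) - (r / 2) * Real.sqrt (4 * R ^ 2 - r ^ 2))) r := by
  have hPlane : finrank ℝ Plane = 2 := finrank_euclideanSpace_fin
  have F_eq : F = distanceCDF volume (closedBall (0 : Plane) R) (closedBall 0 R) := by
    ext t
    rw [hF, hD, distanceCDF, volume_real_closedBall hPlane 0 hR.le, measureReal_def]
    ring
  exact F_eq ▸ distance_pdf_coincident_disks_general hPlane 0 ⟨hr0, hr2R⟩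
end
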